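/- Suppose ν(dy) = exp(−U(y)) dy is a probability measure with convex support, finite second moment, U of class C² on the support, and ∇²U(y) ⪰ κ I_d for all y in the support (ν is κ-semi-log-concave) for some κ ∈ ℝ. Then for every t ∈ (0,1) such that κ a_t² + b_t² > 0 and every x ∈ ℝ^d, ∇_x v(t,x) ⪯ ((κ a_t ȧ_t + b_t ḃ_t)/(κ a_t² + b_t²)) I_d. -/

import Mathlib

open MeasureTheory Real Set
open scoped RealInnerProductSpace ENNReal

noncomputable section

/-! Writing `α, β` for the coefficients at a fixed time, the Jacobian of the velocity field is a
multiple of the identity plus a nonnegative multiple of the Hessian of the log-marginal, so it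
suffices that `log p_t` is strongly concave of modulus `c = κ / (κ α² + β²)`. In the joint exponent
`U y + ‖x - β y‖² / (2 α²)`, completing the square shows that subtracting `(c / 2) ‖x‖²` leaves a
jointly convex function of `(x, y)`, and Prékopa's theorem then says that integrating out `y`
preserves log-concavity. The Prékopa–Leindler inequality behind it follows on the line from
Brunn–Minkowski applied to superlevel sets, and tensorizes. -/

section BrunnMinkowski

open scoped Pointwise

theorem volume_add_le_volume_add_of_isCompact {K L : Set ℝ} (hK : IsCompact K) (hL : IsCompact L)
    (hK₀ : K.Nonempty) (hL₀ : L.Nonempty) : volume K + volume L ≤ volume (K + L) := by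
  have hM : sSup K ∈ K := hK.sSup_mem hK₀
  have hm : sInf L ∈ L := hL.sInf_mem hL₀
  -- The translates `K + inf L` and `sup K + L` lie in `K + L` and meet only at `sup K + inf L`.
  have hdisj : AEDisjoint volume ((· + sInf L) '' K) ((sSup K + ·) '' L) := by
    refine measure_mono_null (t := {sSup K + sInf L}) ?_ (measure_singleton _)
    rintro z ⟨⟨x, hx, rfl⟩, ⟨y, hy, hxy⟩⟩
    have hx' : x ≤ sSup K := le_csSup hK.bddAbove hx
    have hy' : sInf L ≤ y := csInf_le hL.bddBelow hy
    exact mem_singleton_iff.2 (by linarith [hxy.symm.le])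
  have hmeas : NullMeasurableSet ((sSup K + ·) '' L) volume :=
    (hL.image (continuous_const_add _)).measurableSet.nullMeasurableSet
  calc volume K + volume L
      = volume ((· + sInf L) '' K) + volume ((sSup K + ·) '' L) := by
        simp only [image_add_right, measure_preimage_add_right, image_add_left,
          measure_preimage_add]
    _ = volume ((· + sInf L) '' K ∪ (sSup K + ·) '' L) := (measure_union₀ hmeas hdisj).symm
    _ ≤ volume (K + L) := measure_mono <| union_subset
        (image_subset_iff.2 fun _ hx => add_mem_add hx hm)
        (image_subset_iff.2 fun _ hy => add_mem_add hM hy)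

theorem volume_add_le_volume_add {A B : Set ℝ} (hA : MeasurableSet A) (hB : MeasurableSet B)
    (hA₀ : A.Nonempty) (hB₀ : B.Nonempty) : volume A + volume B ≤ volume (A + B) := by
  obtain ⟨x, hx⟩ := hA₀
  obtain ⟨y, hy⟩ := hB₀
  rw [hA.measure_eq_iSup_isCompact, hB.measure_eq_iSup_isCompact]
  simp only [iSup_and']
  refine ENNReal.biSup_add_biSup_le' ⟨∅, empty_subset _, isCompact_empty⟩
    ⟨∅, empty_subset _, isCompact_empty⟩ fun K ⟨hKA, hK⟩ L ⟨hLB, hL⟩ => ?_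
  calc volume K + volume L ≤ volume (insert x K) + volume (insert y L) := by
        gcongr <;> exact subset_insert _ _
    _ ≤ volume (insert x K + insert y L) := volume_add_le_volume_add_of_isCompact
        (hK.insert x) (hL.insert y) (insert_nonempty _ _) (insert_nonempty _ _)
    _ ≤ volume (A + B) :=
        measure_mono (add_subset_add (insert_subset hx hKA) (insert_subset hy hLB))

end BrunnMinkowski

section PrekopaLeindler

theorem lintegral_eq_lintegral_Ioi_meas_lt {X : Type*} [MeasurableSpace X] {μ : Measure X}
    {f : X → ℝ≥0∞} (hf : Measurable f) (hf' : ∀ x, f x ≠ ∞) :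
    ∫⁻ x, f x ∂μ = ∫⁻ t in Ioi 0, μ {x | ENNReal.ofReal t < f x} := by
  have hlt (t : ℝ) (ht : t ∈ Ioi 0) :
      {x | ENNReal.ofReal t < f x} = {x | t < (f x).toReal} :=
    Set.ext fun x => ENNReal.ofReal_lt_iff_lt_toReal (mem_Ioi.1 ht).le (hf' x)
  rw [setLIntegral_congr_fun measurableSet_Ioi fun t ht => congrArg μ (hlt t ht),
    ← lintegral_eq_lintegral_meas_lt μ (.of_forall fun _ => ENNReal.toReal_nonneg)
      hf.ennreal_toReal.aemeasurable]
  exact lintegral_congr fun x => (ENNReal.ofReal_toReal (hf' x)).symm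

theorem lintegral_eq_iSup_lintegral_min_natCast {X : Type*} [MeasurableSpace X] {μ : Measure X}
    {f : X → ℝ≥0∞} (hf : Measurable f) :
    ∫⁻ x, f x ∂μ = ⨆ n : ℕ, ∫⁻ x, min (f x) n ∂μ := by
  rw [← lintegral_iSup (fun n => hf.min measurable_const)
    fun m n hmn x => min_le_min_left _ (Nat.cast_le.2 hmn)]
  refine lintegral_congr fun x => ?_
  change f x = ⨆ n : ℕ, f x ⊓ n
  rw [← inf_iSup_eq, ENNReal.iSup_natCast, inf_top_eq]

variable {a b : ℝ}

theorem ennreal_geom_mean_le_arith_mean2_weighted (ha : 0 < a) (hb : 0 < b) (hab : a + b = 1)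
    (x y : ℝ≥0∞) : x ^ a * y ^ b ≤ ENNReal.ofReal a * x + ENNReal.ofReal b * y := by
  have hpq : (1 / a).HolderConjugate (1 / b) :=
    Real.holderConjugate_one_div ha hb hab
  have h := ENNReal.young_inequality (x ^ a) (y ^ b) hpq
  rw [← ENNReal.rpow_mul, ← ENNReal.rpow_mul, mul_one_div_cancel ha.ne',
    mul_one_div_cancel hb.ne', ENNReal.rpow_one, ENNReal.rpow_one] at h
  refine h.trans_eq ?_
  rw [one_div, one_div, ENNReal.ofReal_inv_of_pos ha, ENNReal.ofReal_inv_of_pos hb,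
    div_eq_mul_inv, div_eq_mul_inv, inv_inv, inv_inv, mul_comm x, mul_comm y]

/-- The Prékopa–Leindler inequality with weights `a` and `b`, as a property of the measure `μ`. -/
def SatisfiesPrekopaLeindler {E : Type*} [AddCommGroup E] [Module ℝ E] [MeasurableSpace E]
    (a b : ℝ) (μ : Measure E) : Prop :=
  ∀ ⦃f g h : E → ℝ≥0∞⦄, Measurable f → Measurable g → Measurable h →
    (∀ x y, f x ^ a * g y ^ b ≤ h (a • x + b • y)) →
      (∫⁻ x, f x ∂μ) ^ a * (∫⁻ x, g x ∂μ) ^ b ≤ ∫⁻ x, h x ∂μ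

open scoped Pointwise in
theorem volume_superlevel_add_le (ha : 0 < a) (hb : 0 < b) (hab : a + b = 1)
    {f g h : ℝ → ℝ≥0∞} (hf : Measurable f) (hg : Measurable g)
    (hfgh : ∀ x y, f x ^ a * g y ^ b ≤ h (a • x + b • y)) {τ : ℝ≥0∞}
    (hτf : ∃ x, τ < f x) (hτg : ∃ x, τ < g x) :
    ENNReal.ofReal a * volume {x | τ < f x} + ENNReal.ofReal b * volume {x | τ < g x} ≤
      volume {x | τ < h x} := by
  have hvol {r : ℝ} (hr : 0 < r) (s : Set ℝ) : volume (r • s) = ENNReal.ofReal r * volume s := by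
    rw [Measure.addHaar_smul_of_nonneg _ hr.le, Module.finrank_self, pow_one]
  have hsub : a • {x | τ < f x} + b • {x | τ < g x} ⊆ {x | τ < h x} := by
    rintro _ ⟨_, ⟨x, hx, rfl⟩, _, ⟨y, hy, rfl⟩, rfl⟩
    calc τ = τ ^ a * τ ^ b := by
          rw [← ENNReal.rpow_add_of_nonneg _ _ ha.le hb.le, hab, ENNReal.rpow_one]
      _ < f x ^ a * g y ^ b :=
          ENNReal.mul_lt_mul (ENNReal.rpow_lt_rpow hx ha) (ENNReal.rpow_lt_rpow hy hb)
      _ ≤ h (a • x + b • y) := hfgh x y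
  rw [← hvol ha, ← hvol hb]
  exact (volume_add_le_volume_add ((hf measurableSet_Ioi).const_smul₀ a)
    ((hg measurableSet_Ioi).const_smul₀ b) (Set.Nonempty.smul_set hτf)
    (Set.Nonempty.smul_set hτg)).trans (measure_mono hsub)

theorem lintegral_add_le_of_iSup_eq_one (ha : 0 < a) (hb : 0 < b) (hab : a + b = 1)
    {f g h : ℝ → ℝ≥0∞} (hf : Measurable f) (hg : Measurable g) (hh : Measurable h)
    (hf₁ : ⨆ x, f x = 1) (hg₁ : ⨆ x, g x = 1)
    (hfgh : ∀ x y, f x ^ a * g y ^ b ≤ h (a • x + b • y)) :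
    ENNReal.ofReal a * (∫⁻ x, f x) + ENNReal.ofReal b * ∫⁻ x, g x ≤ ∫⁻ x, h x := by
  have hf_le (x : ℝ) : f x ≤ 1 := hf₁ ▸ le_iSup f x
  have hg_le (x : ℝ) : g x ≤ 1 := hg₁ ▸ le_iSup g x
  have hfgh' (x y : ℝ) : f x ^ a * g y ^ b ≤ min (h (a • x + b • y)) 1 :=
    le_min (hfgh x y) <| mul_le_one' (ENNReal.rpow_le_one (hf_le x) ha.le)
      (ENNReal.rpow_le_one (hg_le y) hb.le)
  have hmeas : Measurable fun t : ℝ => volume {x | ENNReal.ofReal t < f x} :=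
    Antitone.measurable fun s t hst => measure_mono fun x hx =>
      (ENNReal.ofReal_le_ofReal hst).trans_lt hx
  calc ENNReal.ofReal a * (∫⁻ x, f x) + ENNReal.ofReal b * ∫⁻ x, g x
      = ∫⁻ t in Ioi 0, (ENNReal.ofReal a * volume {x | ENNReal.ofReal t < f x} +
          ENNReal.ofReal b * volume {x | ENNReal.ofReal t < g x}) := by
        rw [lintegral_eq_lintegral_Ioi_meas_lt hf
            fun x => ne_top_of_le_ne_top ENNReal.one_ne_top (hf_le x),
          lintegral_eq_lintegral_Ioi_meas_lt hg
            fun x => ne_top_of_le_ne_top ENNReal.one_ne_top (hg_le x),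
          lintegral_add_left (hmeas.const_mul _),
          lintegral_const_mul' _ _ ENNReal.ofReal_ne_top,
          lintegral_const_mul' _ _ ENNReal.ofReal_ne_top]
    _ ≤ ∫⁻ t in Ioi 0, volume {x | ENNReal.ofReal t < min (h x) 1} := by
        refine lintegral_mono fun t => ?_
        rcases lt_or_ge (ENNReal.ofReal t) 1 with ht | ht
        · exact volume_superlevel_add_le ha hb hab hf hg hfgh' (lt_iSup_iff.1 (hf₁ ▸ ht))
            (lt_iSup_iff.1 (hg₁ ▸ ht))
        · simp [((hf_le _).trans ht).not_gt, ((hg_le _).trans ht).not_gt]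
    _ = ∫⁻ x, min (h x) 1 := (lintegral_eq_lintegral_Ioi_meas_lt (hh.min measurable_const)
        fun x => ne_top_of_le_ne_top ENNReal.one_ne_top (min_le_right _ _)).symm
    _ ≤ ∫⁻ x, h x := lintegral_mono fun x => min_le_left _ _

theorem prekopaLeindler_of_iSup_ne_top (ha : 0 < a) (hb : 0 < b) (hab : a + b = 1)
    {f g h : ℝ → ℝ≥0∞} (hf : Measurable f) (hg : Measurable g) (hh : Measurable h)
    (hf' : ⨆ x, f x ≠ ∞) (hg' : ⨆ x, g x ≠ ∞)
    (hfgh : ∀ x y, f x ^ a * g y ^ b ≤ h (a • x + b • y)) :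
    (∫⁻ x, f x) ^ a * (∫⁻ x, g x) ^ b ≤ ∫⁻ x, h x := by
  rcases eq_or_ne (⨆ x, f x) 0 with hf₀ | hf₀
  · simp [ENNReal.iSup_eq_zero.1 hf₀, ENNReal.zero_rpow_of_pos ha]
  rcases eq_or_ne (⨆ x, g x) 0 with hg₀ | hg₀
  · simp [ENNReal.iSup_eq_zero.1 hg₀, ENNReal.zero_rpow_of_pos hb]
  set A := ⨆ x, f x
  set B := ⨆ x, g x
  have hA : A ^ a ≠ 0 := fun h => hf₀ ((ENNReal.rpow_eq_zero_iff_of_pos ha).1 h)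
  have hB : B ^ b ≠ 0 := fun h => hg₀ ((ENNReal.rpow_eq_zero_iff_of_pos hb).1 h)
  have hA' : A ^ a ≠ ∞ := ENNReal.rpow_ne_top_of_nonneg ha.le hf'
  have hB' : B ^ b ≠ ∞ := ENNReal.rpow_ne_top_of_nonneg hb.le hg'
  have hdiv (x y : ℝ≥0∞) : (x / A) ^ a * (y / B) ^ b = x ^ a * y ^ b / (A ^ a * B ^ b) := by
    rw [ENNReal.div_rpow_of_nonneg _ _ ha.le, ENNReal.div_rpow_of_nonneg _ _ hb.le,
      ENNReal.mul_div_mul_comm (.inr hB') (.inl hA')]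
  have hnorm := lintegral_add_le_of_iSup_eq_one ha hb hab (hf.div_const A) (hg.div_const B)
    (hh.div_const (A ^ a * B ^ b)) (by rw [← ENNReal.iSup_div, ENNReal.div_self hf₀ hf'])
    (by rw [← ENNReal.iSup_div, ENNReal.div_self hg₀ hg'])
    fun x y => (hdiv _ _).trans_le (ENNReal.div_le_div_right (hfgh x y) _)
  have hint {k : ℝ → ℝ≥0∞} (hk : Measurable k) (c : ℝ≥0∞) : ∫⁻ x, k x / c = (∫⁻ x, k x) / c :=
    lintegral_mul_const _ hk
  rw [hint hf, hint hg, hint hh] at hnorm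
  have hmean := (ennreal_geom_mean_le_arith_mean2_weighted ha hb hab _ _).trans hnorm
  rw [hdiv] at hmean
  rwa [ENNReal.div_le_iff (mul_ne_zero hA hB) (ENNReal.mul_ne_top hA' hB'), ENNReal.div_mul_cancel
    (mul_ne_zero hA hB) (ENNReal.mul_ne_top hA' hB')] at hmean

theorem satisfiesPrekopaLeindler_volume_real (ha : 0 < a) (hb : 0 < b) (hab : a + b = 1) :
    SatisfiesPrekopaLeindler a b (volume : Measure ℝ) := by
  intro f g h hf hg hh hfgh
  have hbdd (k : ℝ → ℝ≥0∞) (n : ℕ) : ⨆ x, min (k x) n ≠ ∞ :=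
    ne_top_of_le_ne_top (ENNReal.natCast_ne_top n) (iSup_le fun x => min_le_right _ _)
  have hsup {r : ℝ} (hr : 0 < r) {k : ℝ → ℝ≥0∞} (hk : Measurable k) :
      (∫⁻ x, k x) ^ r = ⨆ n : ℕ, (∫⁻ x, min (k x) n) ^ r := by
    rw [lintegral_eq_iSup_lintegral_min_natCast hk]
    exact (ENNReal.orderIsoRpow r hr).map_iSup _
  rw [hsup ha hf, hsup hb hg, ENNReal.iSup_mul]
  refine iSup_le fun m => ?_
  rw [ENNReal.mul_iSup]
  refine iSup_le fun n => prekopaLeindler_of_iSup_ne_top ha hb hab (hf.min measurable_const)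
    (hg.min measurable_const) hh (hbdd f m) (hbdd g n) fun x y => ?_
  exact (mul_le_mul' (ENNReal.rpow_le_rpow (min_le_left _ _) ha.le)
    (ENNReal.rpow_le_rpow (min_le_left _ _) hb.le)).trans (hfgh x y)

namespace SatisfiesPrekopaLeindler

variable {E F : Type*} [AddCommGroup E] [Module ℝ E] [MeasurableSpace E] [AddCommGroup F]
  [Module ℝ F] [MeasurableSpace F] {μ : Measure E}

theorem prod {ν : Measure F} [SFinite ν] (hμ : SatisfiesPrekopaLeindler a b μ)
    (hν : SatisfiesPrekopaLeindler a b ν) : SatisfiesPrekopaLeindler a b (μ.prod ν) := by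
  intro f g h hf hg hh hfgh
  rw [lintegral_prod _ hf.aemeasurable, lintegral_prod _ hg.aemeasurable,
    lintegral_prod _ hh.aemeasurable]
  exact hμ hf.lintegral_prod_right' hg.lintegral_prod_right' hh.lintegral_prod_right'
    fun x x' => hν (hf.comp measurable_prodMk_left) (hg.comp measurable_prodMk_left)
      (hh.comp measurable_prodMk_left) fun y y' => hfgh (x, y) (x', y')

theorem map (hμ : SatisfiesPrekopaLeindler a b μ) (L : E →ₗ[ℝ] F) (hL : Measurable L) :
    SatisfiesPrekopaLeindler a b (μ.map L) := by
  intro f g h hf hg hh hfgh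
  rw [lintegral_map hf hL, lintegral_map hg hL, lintegral_map hh hL]
  refine hμ (hf.comp hL) (hg.comp hL) (hh.comp hL) fun x y => ?_
  rw [map_add, map_smul, map_smul]
  exact hfgh (L x) (L y)

theorem smul (ha : 0 ≤ a) (hb : 0 ≤ b) (hab : a + b = 1) (hμ : SatisfiesPrekopaLeindler a b μ)
    (c : ℝ≥0∞) : SatisfiesPrekopaLeindler a b (c • μ) := by
  intro f g h hf hg hh hfgh
  simp only [lintegral_smul_measure, smul_eq_mul]
  calc (c * ∫⁻ x, f x ∂μ) ^ a * (c * ∫⁻ x, g x ∂μ) ^ b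
      = c ^ (a + b) * ((∫⁻ x, f x ∂μ) ^ a * (∫⁻ x, g x ∂μ) ^ b) := by
        rw [ENNReal.mul_rpow_of_nonneg _ _ ha, ENNReal.mul_rpow_of_nonneg _ _ hb,
          ENNReal.rpow_add_of_nonneg _ _ ha hb, mul_mul_mul_comm]
    _ ≤ c * ∫⁻ x, h x ∂μ := by
        rw [hab, ENNReal.rpow_one]
        gcongr
        exact hμ hf hg hh hfgh

end SatisfiesPrekopaLeindler

theorem satisfiesPrekopaLeindler_volume_pi (ha : 0 < a) (hb : 0 < b) (hab : a + b = 1) (n : ℕ) :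
    SatisfiesPrekopaLeindler a b (volume : Measure (Fin n → ℝ)) := by
  induction n with
  | zero =>
    intro f g h _ _ _ hfgh
    simpa only [Measure.volume_pi_eq_dirac 0, lintegral_dirac,
      Subsingleton.elim (a • 0 + b • 0) (0 : Fin 0 → ℝ)] using hfgh 0 0
  | succ n ih =>
    let L := Fin.consEquivL ℝ fun _ : Fin (n + 1) => ℝ
    have hL : MeasurePreserving L := by
      convert (volume_preserving_piFinSuccAbove (fun _ : Fin (n + 1) => ℝ) 0).symm using 1
      exact congrArg DFunLike.coe (Fin.insertNthEquiv_zero fun _ : Fin (n + 1) => ℝ).symm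
    rw [← hL.map_eq]
    exact ((satisfiesPrekopaLeindler_volume_real ha hb hab).prod ih).map L.toLinearMap hL.measurable

theorem satisfiesPrekopaLeindler_of_isAddHaarMeasure (ha : 0 < a) (hb : 0 < b) (hab : a + b = 1)
    {E : Type*} [NormedAddCommGroup E] [NormedSpace ℝ E] [FiniteDimensional ℝ E]
    [MeasurableSpace E] [BorelSpace E] (μ : Measure E) [μ.IsAddHaarMeasure] :
    SatisfiesPrekopaLeindler a b μ := by
  let L : (Fin (Module.finrank ℝ E) → ℝ) ≃L[ℝ] E :=
    ContinuousLinearEquiv.ofFinrankEq (by simp)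
  have : (volume.map L).IsAddHaarMeasure := L.isAddHaarMeasure_map _
  rw [Measure.isAddLeftInvariant_eq_smul μ (volume.map L)]
  exact ((satisfiesPrekopaLeindler_volume_pi ha hb hab _).map L.toLinearMap
    L.continuous.measurable).smul ha.le hb.le hab
    (μ.addHaarScalarFactor (volume.map L))

end PrekopaLeindler

section Prekopa

variable {E F : Type*} [NormedAddCommGroup E] [NormedSpace ℝ E] [FiniteDimensional ℝ E]
  [MeasurableSpace E] [BorelSpace E] [AddCommGroup F] [Module ℝ F] {μ : Measure E}
  [μ.IsAddHaarMeasure] {O : Set E} {Φ : F → E → ℝ}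

theorem measurable_indicator_ofReal_exp_neg (hO : IsOpen O)
    {φ : E → ℝ} (hφ : ConvexOn ℝ O φ) :
    Measurable (O.indicator fun y => ENNReal.ofReal (exp (-φ y))) := by
  classical
  have hcont : ContinuousOn (fun y => ENNReal.ofReal (exp (-φ y))) O :=
    ENNReal.continuous_ofReal.comp_continuousOn (hφ.continuousOn hO).neg.rexp
  rw [← piecewise_eq_indicator]
  exact hcont.measurable_piecewise continuousOn_const hO.measurableSet

theorem setIntegral_exp_neg_rpow_mul_le (hO : IsOpen O)
    (hΦ : ConvexOn ℝ (univ ×ˢ O) fun z : F × E => Φ z.1 z.2)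
    (hint : ∀ x, IntegrableOn (fun y => exp (-Φ x y)) O μ) {a b : ℝ} (ha : 0 < a) (hb : 0 < b)
    (hab : a + b = 1) (x x' : F) :
    (∫ y in O, exp (-Φ x y) ∂μ) ^ a * (∫ y in O, exp (-Φ x' y) ∂μ) ^ b ≤
      ∫ y in O, exp (-Φ (a • x + b • x') y) ∂μ := by
  have hΦx (x : F) : ConvexOn ℝ O (Φ x) := by
    have h := hΦ.comp_affineMap ((AffineMap.const ℝ E x).prod (AffineMap.id ℝ E))
    rwa [AffineMap.coe_prod, mk_preimage_prod, preimage_univ, univ_inter] at h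
  let D (x : F) : E → ℝ≥0∞ := O.indicator fun y => ENNReal.ofReal (exp (-Φ x y))
  have hD (x : F) : ENNReal.ofReal (∫ y in O, exp (-Φ x y) ∂μ) = ∫⁻ y, D x y ∂μ := by
    rw [ofReal_integral_eq_lintegral_ofReal (hint x) (.of_forall fun y => (exp_pos _).le),
      lintegral_indicator hO.measurableSet]
  have hD_meas (x : F) : Measurable (D x) := measurable_indicator_ofReal_exp_neg hO (hΦx x)
  have hD_mul (y y' : E) : D x y ^ a * D x' y' ^ b ≤ D (a • x + b • x') (a • y + b • y') := by
    by_cases hy : y ∈ O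
    swap; · simp [D, hy, ENNReal.zero_rpow_of_pos ha]
    by_cases hy' : y' ∈ O
    swap; · simp [D, hy', ENNReal.zero_rpow_of_pos hb]
    have hyy' : a • y + b • y' ∈ O := (hΦx x).1 hy hy' ha.le hb.le hab
    have hΦ' : Φ (a • x + b • x') (a • y + b • y') ≤ a * Φ x y + b * Φ x' y' :=
      hΦ.2 (mk_mem_prod (mem_univ x) hy) (mk_mem_prod (mem_univ x') hy') ha.le hb.le hab
    simp only [D, indicator_of_mem, hy, hy', hyy', ENNReal.ofReal_rpow_of_pos (exp_pos _),
      ← exp_mul, ← ENNReal.ofReal_mul (exp_pos _).le, ← exp_add]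
    exact ENNReal.ofReal_le_ofReal (exp_le_exp.2 (by linarith))
  have hI (x : F) : 0 ≤ ∫ y in O, exp (-Φ x y) ∂μ := integral_nonneg fun y => (exp_pos _).le
  have hPL := satisfiesPrekopaLeindler_of_isAddHaarMeasure ha hb hab μ (hD_meas x) (hD_meas x')
    (hD_meas (a • x + b • x')) hD_mul
  rwa [← hD, ← hD, ← hD, ENNReal.ofReal_rpow_of_nonneg (hI x) ha.le,
    ENNReal.ofReal_rpow_of_nonneg (hI x') hb.le, ← ENNReal.ofReal_mul (rpow_nonneg (hI x) a),
    ENNReal.ofReal_le_ofReal_iff (hI _)] at hPL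

theorem concaveOn_log_setIntegral_exp_neg (hO : IsOpen O) (hO₀ : O.Nonempty)
    (hΦ : ConvexOn ℝ (univ ×ˢ O) fun z : F × E => Φ z.1 z.2)
    (hint : ∀ x, IntegrableOn (fun y => exp (-Φ x y)) O μ) :
    ConcaveOn ℝ univ fun x => log (∫ y in O, exp (-Φ x y) ∂μ) := by
  have : NeZero (μ.restrict O) := ⟨mt Measure.restrict_eq_zero.1 (hO.measure_pos μ hO₀).ne'⟩
  have hI (x : F) : 0 < ∫ y in O, exp (-Φ x y) ∂μ := integral_exp_pos (hint x)
  refine concaveOn_iff_forall_pos.2 ⟨convex_univ, fun x _ x' _ a b ha hb hab => ?_⟩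
  rw [smul_eq_mul, smul_eq_mul, ← log_rpow (hI x), ← log_rpow (hI x'),
    ← log_mul (rpow_pos_of_pos (hI x) a).ne' (rpow_pos_of_pos (hI x') b).ne']
  exact log_le_log (mul_pos (rpow_pos_of_pos (hI x) a) (rpow_pos_of_pos (hI x') b))
    (setIntegral_exp_neg_rpow_mul_le hO hΦ hint ha hb hab x x')

end Prekopa

section SemiLogConcave

theorem strongConvexOn_of_hasDerivAt2 {s : Set ℝ} (hs : Convex ℝ s) {φ φ' φ'' : ℝ → ℝ} {m : ℝ}
    (h₁ : ∀ t ∈ s, HasDerivAt φ (φ' t) t) (h₂ : ∀ t ∈ s, HasDerivAt φ' (φ'' t) t)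
    (hm : ∀ t ∈ s, m ≤ φ'' t) : StrongConvexOn s m φ := by
  rw [strongConvexOn_iff_convex]
  have hd₁ (t : ℝ) (ht : t ∈ s) :
      HasDerivAt (fun t => φ t - m / 2 * ‖t‖ ^ 2) (φ' t - m * t) t := by
    simp only [Real.norm_eq_abs, sq_abs]
    exact ((h₁ t ht).sub ((hasDerivAt_pow 2 t).const_mul (m / 2))).congr_deriv
      (by push_cast; ring)
  have hd₂ (t : ℝ) (ht : t ∈ s) : HasDerivAt (fun t => φ' t - m * t) (φ'' t - m) t :=
    ((h₂ t ht).sub ((hasDerivAt_id t).const_mul m)).congr_deriv (by ring)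
  exact convexOn_of_hasDerivWithinAt2_nonneg hs
    (fun t ht => (hd₁ t ht).continuousAt.continuousWithinAt)
    (fun t ht => (hd₁ t (interior_subset ht)).hasDerivWithinAt)
    (fun t ht => (hd₂ t (interior_subset ht)).hasDerivWithinAt)
    fun t ht => sub_nonneg.2 (hm t (interior_subset ht))

theorem strongConvexOn_of_lineMap {V : Type*} [NormedAddCommGroup V] [NormedSpace ℝ V]
    {s : Set V} (hs : Convex ℝ s) {f : V → ℝ} {m : ℝ}
    (h : ∀ x ∈ s, ∀ y ∈ s,
      StrongConvexOn (Icc 0 1) (m * ‖y - x‖ ^ 2) fun t : ℝ => f (AffineMap.lineMap x y t)) :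
    StrongConvexOn s m f := by
  refine ⟨hs, fun x hx y hy a b ha hb hab => ?_⟩
  have h01 := (h x hx y hy).2 (left_mem_Icc.2 zero_le_one) (right_mem_Icc.2 zero_le_one) ha hb hab
  have hline : AffineMap.lineMap x y b = a • x + b • y := by
    rw [AffineMap.lineMap_apply_module, ← hab, add_sub_cancel_right]
  simp only [smul_eq_mul, mul_zero, mul_one, zero_add, AffineMap.lineMap_apply_zero,
    AffineMap.lineMap_apply_one, hline, zero_sub, norm_neg, norm_one, one_pow] at h01 ⊢
  rw [norm_sub_rev x y]
  linarith

theorem strongConvexOn_of_le_iteratedFDeriv_two {V : Type*} [NormedAddCommGroup V]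
    [NormedSpace ℝ V] {O : Set V} (hO : IsOpen O) (hc : Convex ℝ O) {U : V → ℝ}
    (hU : ContDiffOn ℝ 2 U O) {m : ℝ}
    (hm : ∀ y ∈ O, ∀ w, m * ‖w‖ ^ 2 ≤ iteratedFDeriv ℝ 2 U y ![w, w]) : StrongConvexOn O m U := by
  refine strongConvexOn_of_lineMap hc fun x hx y hy => ?_
  have hmem (t : ℝ) (ht : t ∈ Icc (0 : ℝ) 1) : AffineMap.lineMap x y t ∈ O :=
    hc.lineMap_mem hx hy ht
  have hU₁ (z : V) (hz : z ∈ O) : HasFDerivAt U (fderiv ℝ U z) z :=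
    ((hU.contDiffAt (hO.mem_nhds hz)).differentiableAt two_ne_zero).hasFDerivAt
  have hU₂ (z : V) (hz : z ∈ O) : HasFDerivAt (fderiv ℝ U) (fderiv ℝ (fderiv ℝ U) z) z :=
    (((hU.contDiffAt (hO.mem_nhds hz)).fderiv_right (m := 1) one_add_one_eq_two.le).differentiableAt
      one_ne_zero).hasFDerivAt
  refine strongConvexOn_of_hasDerivAt2 (convex_Icc 0 1)
    (fun t ht => (hU₁ _ (hmem t ht)).comp_hasDerivAt t AffineMap.hasDerivAt_lineMap)
    (fun t ht => ((hU₂ _ (hmem t ht)).comp_hasDerivAt t AffineMap.hasDerivAt_lineMap).clm_apply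
      (hasDerivAt_const t (y - x))) fun t ht => ?_
  simpa [iteratedFDeriv_two_apply] using hm _ (hmem t ht) (y - x)

variable {E : Type*} [NormedAddCommGroup E] [InnerProductSpace ℝ E] [FiniteDimensional ℝ E]
  [MeasurableSpace E] [BorelSpace E]

/-- `ν` is `κ`-semi-log-concave: its density is `exp (-U)` with `U` strongly convex of modulus `κ`
on an open convex set, and zero elsewhere. The modulus `κ` may be negative; working on an open set
loses nothing, as the frontier of a convex set is null. -/
def IsSemiLogConcave (κ : ℝ) (ν : Measure E) : Prop :=
  ∃ (O : Set E) (U : E → ℝ), IsOpen O ∧ StrongConvexOn O κ U ∧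
    ν = (volume.restrict O).withDensity fun y => ENNReal.ofReal (exp (-U y))

theorem isSemiLogConcave_withDensity_exp_neg {κ : ℝ} {Ω : Set E} (hΩ : Convex ℝ Ω) {U : E → ℝ}
    (hU : ContDiffOn ℝ 2 U Ω)
    (hκ : ∀ y ∈ Ω, ∀ w, κ * ‖w‖ ^ 2 ≤ iteratedFDeriv ℝ 2 U y ![w, w]) :
    IsSemiLogConcave κ
      ((volume.restrict Ω).withDensity fun y => ENNReal.ofReal (exp (-U y))) := by
  refine ⟨interior Ω, U, isOpen_interior, strongConvexOn_of_le_iteratedFDeriv_two isOpen_interior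
    hΩ.interior (hU.mono interior_subset) fun y hy => hκ y (interior_subset hy), ?_⟩
  rw [Measure.restrict_congr_set
    (interior_ae_eq_of_null_frontier (hΩ.addHaar_frontier volume))]

end SemiLogConcave

section GaussianSmoothing

variable {E : Type*} [NormedAddCommGroup E] [InnerProductSpace ℝ E]

theorem continuousOn_of_strongConvexOn [FiniteDimensional ℝ E] {O : Set E} (hO : IsOpen O)
    {m : ℝ} {f : E → ℝ} (hf : StrongConvexOn O m f) : ContinuousOn f O := by
  have h := (strongConvexOn_iff_convex.1 hf).continuousOn hO
  exact (h.add (continuousOn_const.mul (continuous_norm.pow 2).continuousOn)).congr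
    fun x _ => (sub_add_cancel _ _).symm

theorem convexOn_norm_sq_comp {V W : Type*} [AddCommGroup V] [Module ℝ V]
    [NormedAddCommGroup W] [NormedSpace ℝ W] (L : V →ₗ[ℝ] W) :
    ConvexOn ℝ univ fun z => ‖L z‖ ^ 2 :=
  (convexOn_univ_norm.pow (fun _ _ => norm_nonneg _) 2).comp_linearMap L

theorem completing_the_square {α β κ : ℝ} (hα : α ≠ 0) (hq : κ * α ^ 2 + β ^ 2 ≠ 0) (x y : E) :
    ‖x - β • y‖ ^ 2 / (2 * α ^ 2) - κ / (κ * α ^ 2 + β ^ 2) / 2 * ‖x‖ ^ 2 =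
      ‖β • x - (κ * α ^ 2 + β ^ 2) • y‖ ^ 2 / (2 * α ^ 2 * (κ * α ^ 2 + β ^ 2)) -
        κ / 2 * ‖y‖ ^ 2 := by
  simp only [norm_sub_sq_real, norm_smul, mul_pow, Real.norm_eq_abs, sq_abs, real_inner_smul_left,
    real_inner_smul_right]
  generalize hq' : κ * α ^ 2 + β ^ 2 = q at hq ⊢
  field_simp
  rw [← hq']
  ring

theorem convexOn_add_norm_sub_smul_sq {α β κ : ℝ} (hα : α ≠ 0) (hq : 0 < κ * α ^ 2 + β ^ 2)
    {O : Set E} {U : E → ℝ} (hU : StrongConvexOn O κ U) :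
    ConvexOn ℝ (univ ×ˢ O) fun z : E × E => U z.2 + ‖z.1 - β • z.2‖ ^ 2 / (2 * α ^ 2) -
      κ / (κ * α ^ 2 + β ^ 2) / 2 * ‖z.1‖ ^ 2 := by
  set q := κ * α ^ 2 + β ^ 2
  have hU' : ConvexOn ℝ (univ ×ˢ O) fun z : E × E => U z.2 - κ / 2 * ‖z.2‖ ^ 2 := by
    rw [univ_prod]
    exact (strongConvexOn_iff_convex.1 hU).comp_linearMap (LinearMap.snd ℝ E E)
  have hsq : ConvexOn ℝ (univ ×ˢ O) fun z : E × E =>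
      (2 * α ^ 2 * q)⁻¹ • ‖β • z.1 - q • z.2‖ ^ 2 :=
    ((convexOn_norm_sq_comp (β • LinearMap.fst ℝ E E - q • LinearMap.snd ℝ E E)).subset
      (subset_univ _) hU'.1).smul (by positivity)
  refine (hU'.add hsq).congr fun z _ => ?_
  have hz := completing_the_square hα hq.ne' z.1 z.2
  simp only [smul_eq_mul, Pi.add_apply]
  linear_combination -hz

theorem norm_fderiv_smul_clm_le {V W : Type*} [NormedAddCommGroup V] [NormedSpace ℝ V]
    [NormedAddCommGroup W] [NormedSpace ℝ W] {g : V → ℝ} {g' : V →L[ℝ] ℝ} {x : V}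
    (hg : HasFDerivAt g g' x) (J : V →L[ℝ] W) :
    ‖fderiv ℝ (fun z => g z • J z) x‖ ≤ ‖g x‖ * ‖J‖ + ‖g'‖ * ‖J x‖ := by
  rw [(hg.fun_smul J.hasFDerivAt).fderiv]
  refine (norm_add_le _ _).trans_eq ?_
  rw [norm_smul, g'.norm_smulRight_apply]

section Kernel

variable {E : Type*} [NormedAddCommGroup E]

/-- The centred Gaussian kernel of variance `α ^ 2`, without its normalising constant. -/
def gaussianKernel (α : ℝ) (u : E) : ℝ := exp (-‖u‖ ^ 2 / (2 * α ^ 2))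

theorem gaussianKernel_pos (α : ℝ) (u : E) : 0 < gaussianKernel α u := exp_pos _

theorem gaussianKernel_le_one (α : ℝ) (u : E) : gaussianKernel α u ≤ 1 := by
  rw [gaussianKernel, exp_le_one_iff, neg_div]
  exact neg_nonpos.2 (by positivity)

theorem norm_gaussianKernel_le_one (α : ℝ) (u : E) : ‖gaussianKernel α u‖ ≤ 1 := by
  rw [Real.norm_of_nonneg (gaussianKernel_pos α u).le]
  exact gaussianKernel_le_one α u

theorem gaussianKernel_mul_norm_sq_le {α : ℝ} (hα : α ≠ 0) (u : E) :
    gaussianKernel α u * ‖u‖ ^ 2 ≤ 2 * α ^ 2 := by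
  have hα2 : 0 < 2 * α ^ 2 := by positivity
  have h := (Real.mul_exp_neg_le_exp_neg_one (‖u‖ ^ 2 / (2 * α ^ 2))).trans
    (exp_le_one_iff.2 (by norm_num))
  rw [← neg_div, div_mul_eq_mul_div, div_le_one hα2] at h
  rwa [mul_comm]

theorem gaussianKernel_mul_norm_le {α : ℝ} (hα : α ≠ 0) (u : E) :
    gaussianKernel α u * ‖u‖ ≤ 1 + 2 * α ^ 2 := by
  have h : ‖u‖ ≤ 1 + ‖u‖ ^ 2 := by nlinarith
  calc gaussianKernel α u * ‖u‖ ≤ gaussianKernel α u * (1 + ‖u‖ ^ 2) :=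
        mul_le_mul_of_nonneg_left h (gaussianKernel_pos α u).le
    _ ≤ 1 + 2 * α ^ 2 := by
        rw [mul_add, mul_one]
        exact add_le_add (gaussianKernel_le_one α u) (gaussianKernel_mul_norm_sq_le hα u)

variable [InnerProductSpace ℝ E]

theorem contDiff_gaussianKernel (α : ℝ) {n : WithTop ℕ∞} :
    ContDiff ℝ n (gaussianKernel α : E → ℝ) :=
  ((contDiff_norm_sq ℝ).neg.div_const _).exp

theorem hasFDerivAt_gaussianKernel (α : ℝ) (u : E) :
    HasFDerivAt (gaussianKernel α) ((-(α ^ 2)⁻¹ * gaussianKernel α u) • innerSL ℝ u) u := by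
  have h := ((hasStrictFDerivAt_norm_sq u).hasFDerivAt.neg.mul_const (2 * α ^ 2)⁻¹).exp
  refine h.congr_fderiv ?_
  ext z
  simp only [gaussianKernel, Pi.neg_apply, neg_apply, smul_apply, coe_innerSL_apply, smul_eq_mul,
    nsmul_eq_mul, Nat.cast_ofNat, div_eq_mul_inv, mul_inv]
  ring

theorem norm_fderiv_gaussianKernel (α : ℝ) (u : E) :
    ‖fderiv ℝ (gaussianKernel α) u‖ = (α ^ 2)⁻¹ * (gaussianKernel α u * ‖u‖) := by
  rw [(hasFDerivAt_gaussianKernel α u).fderiv, norm_smul, innerSL_apply_norm, norm_mul, norm_neg,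
    Real.norm_of_nonneg (by positivity), Real.norm_of_nonneg (gaussianKernel_pos α u).le, mul_assoc]

theorem norm_fderiv_gaussianKernel_le {α : ℝ} (hα : α ≠ 0) (u : E) :
    ‖fderiv ℝ (gaussianKernel α) u‖ ≤ (α ^ 2)⁻¹ * (1 + 2 * α ^ 2) := by
  rw [norm_fderiv_gaussianKernel]
  exact mul_le_mul_of_nonneg_left (gaussianKernel_mul_norm_le hα u) (by positivity)

theorem norm_fderiv_fderiv_gaussianKernel_le {α : ℝ} (hα : α ≠ 0) (u : E) :
    ‖fderiv ℝ (fderiv ℝ (gaussianKernel α)) u‖ ≤ 3 * (α ^ 2)⁻¹ := by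
  -- `innerSL ℝ` is typed as a conjugate-linear map, which blocks the calculus of linear maps.
  obtain ⟨J, hJ, hJ₁⟩ : ∃ J : E →L[ℝ] E →L[ℝ] ℝ, (∀ u, J u = innerSL ℝ u) ∧ ‖J‖ ≤ 1 :=
    ⟨innerSL ℝ, fun _ => rfl, norm_innerSL_le ℝ⟩
  have hfderiv : fderiv ℝ (gaussianKernel α) = fun u : E =>
      (-(α ^ 2)⁻¹ * gaussianKernel α u) • J u :=
    funext fun u => hJ u ▸ (hasFDerivAt_gaussianKernel α u).fderiv
  have hΓ := ((contDiff_gaussianKernel α (n := 1)).differentiable one_ne_zero u).hasFDerivAt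
  have hk : ‖-(α ^ 2)⁻¹‖ = (α ^ 2)⁻¹ := by
    rw [norm_neg, Real.norm_of_nonneg (by positivity)]
  have hmul : gaussianKernel α u * ‖u‖ * ‖u‖ ≤ 2 * α ^ 2 := by
    rw [mul_assoc, ← sq]
    exact gaussianKernel_mul_norm_sq_le hα u
  calc ‖fderiv ℝ (fderiv ℝ (gaussianKernel α)) u‖
      ≤ ‖-(α ^ 2)⁻¹ * gaussianKernel α u‖ * ‖J‖ +
          ‖(-(α ^ 2)⁻¹) • fderiv ℝ (gaussianKernel α) u‖ * ‖J u‖ := by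
        rw [congrArg (fderiv ℝ · u) hfderiv]
        exact norm_fderiv_smul_clm_le (hΓ.const_mul (-(α ^ 2)⁻¹)) J
    _ = (α ^ 2)⁻¹ * (‖gaussianKernel α u‖ * ‖J‖) +
          (α ^ 2)⁻¹ * ((α ^ 2)⁻¹ * (gaussianKernel α u * ‖u‖ * ‖u‖)) := by
        rw [norm_mul, norm_smul, hk, hJ, innerSL_apply_norm, norm_fderiv_gaussianKernel]
        ring
    _ ≤ (α ^ 2)⁻¹ * (1 * 1) + (α ^ 2)⁻¹ * ((α ^ 2)⁻¹ * (2 * α ^ 2)) := by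
        gcongr
        exact norm_gaussianKernel_le_one α u
    _ = 3 * (α ^ 2)⁻¹ := by
        field_simp
        norm_num

end Kernel

section Measure

variable [MeasurableSpace E]

/-- The Gaussian smoothing of `ν`: the density of `β • Y + α • Z`, with `Y ∼ ν` and `Z` an
independent standard Gaussian, without the factor `(2 * π * α ^ 2) ^ (-d / 2)`, which the score does
not see. -/
def gaussianSmoothing (ν : Measure E) (α β : ℝ) (x : E) : ℝ :=
  ∫ y, gaussianKernel α (x - β • y) ∂ν

theorem gaussianSmoothing_withDensity_exp_neg {μ : Measure E} {U : E → ℝ} (hU : AEMeasurable U μ)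
    (α β : ℝ) (x : E) :
    gaussianSmoothing (μ.withDensity fun y => ENNReal.ofReal (exp (-U y))) α β x =
      ∫ y, exp (-U y) * gaussianKernel α (x - β • y) ∂μ := by
  have hdens : AEMeasurable (fun y => ENNReal.ofReal (exp (-U y))) μ := hU.neg.exp.ennreal_ofReal
  rw [gaussianSmoothing, integral_withDensity_eq_integral_toReal_smul₀ hdens
    (.of_forall fun _ => ENNReal.ofReal_lt_top)]
  simp only [ENNReal.toReal_ofReal (exp_pos _).le, smul_eq_mul]

variable [BorelSpace E]

theorem hasFDerivAt_integral_comp_sub_smul {F : Type*} [NormedAddCommGroup F] [NormedSpace ℝ F]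
    [SecondCountableTopology E] (ν : Measure E) [IsFiniteMeasure ν] (β : ℝ) {Γ : E → F}
    (hΓ : ContDiff ℝ 1 Γ) {C C' : ℝ} (hC : ∀ u, ‖Γ u‖ ≤ C) (hC' : ∀ u, ‖fderiv ℝ Γ u‖ ≤ C')
    (x : E) :
    HasFDerivAt (fun x => ∫ y, Γ (x - β • y) ∂ν) (∫ y, fderiv ℝ Γ (x - β • y) ∂ν) x := by
  have hshift (x : E) : Continuous fun y : E => x - β • y := by fun_prop
  have hmeas (x : E) : AEStronglyMeasurable (fun y => Γ (x - β • y)) ν :=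
    (hΓ.continuous.comp (hshift x)).aestronglyMeasurable
  exact hasFDerivAt_integral_of_dominated_of_fderiv_le (bound := fun _ => C')
    (F' := fun z y => fderiv ℝ Γ (z - β • y)) Filter.univ_mem
    (.of_forall hmeas) (.of_bound (hmeas x) C (.of_forall fun y => hC _))
    ((hΓ.continuous_fderiv one_ne_zero).comp (hshift x)).aestronglyMeasurable
    (.of_forall fun y z _ => hC' _) (integrable_const _)
    (.of_forall fun y z _ =>
      (hasFDerivAt_comp_sub (β • y)).2 (hΓ.differentiable one_ne_zero _).hasFDerivAt)

theorem gaussianSmoothing_pos (ν : Measure E) [IsFiniteMeasure ν] [NeZero ν] (α β : ℝ) (x : E) :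
    0 < gaussianSmoothing ν α β x :=
  integral_exp_pos <| .of_bound
    (Continuous.aestronglyMeasurable (by fun_prop)) 1
    (.of_forall fun y => norm_gaussianKernel_le_one α _)

theorem hasFDerivAt_gaussianSmoothing [SecondCountableTopology E] (ν : Measure E)
    [IsFiniteMeasure ν] {α : ℝ} (hα : α ≠ 0) (β : ℝ) (x : E) :
    HasFDerivAt (gaussianSmoothing ν α β) (∫ y, fderiv ℝ (gaussianKernel α) (x - β • y) ∂ν) x :=
  hasFDerivAt_integral_comp_sub_smul ν β (contDiff_gaussianKernel α)
    (norm_gaussianKernel_le_one α) (norm_fderiv_gaussianKernel_le hα) x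

theorem differentiable_fderiv_gaussianSmoothing [SecondCountableTopology E] (ν : Measure E)
    [IsFiniteMeasure ν] {α : ℝ} (hα : α ≠ 0) (β : ℝ) :
    Differentiable ℝ (fderiv ℝ (gaussianSmoothing ν α β)) := by
  rw [funext fun x => (hasFDerivAt_gaussianSmoothing ν hα β x).fderiv]
  exact fun x => (hasFDerivAt_integral_comp_sub_smul ν β
    ((contDiff_gaussianKernel α (n := 2)).fderiv_right one_add_one_eq_two.le)
    (norm_fderiv_gaussianKernel_le hα) (norm_fderiv_fderiv_gaussianKernel_le hα)
    x).differentiableAt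

variable [FiniteDimensional ℝ E] {ν : Measure E} [IsFiniteMeasure ν]

theorem strongConcaveOn_log_gaussianSmoothing [NeZero ν] {κ α β : ℝ} (hν : IsSemiLogConcave κ ν)
    (hα : α ≠ 0) (hq : 0 < κ * α ^ 2 + β ^ 2) :
    StrongConcaveOn univ (κ / (κ * α ^ 2 + β ^ 2)) fun x => log (gaussianSmoothing ν α β x) := by
  obtain ⟨O, U, hO, hU, hνU⟩ := hν
  set c := κ / (κ * α ^ 2 + β ^ 2)
  have hO₀ : O.Nonempty := by
    rw [nonempty_iff_ne_empty]
    rintro rfl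
    exact NeZero.ne ν (by rw [hνU, Measure.restrict_empty, withDensity_zero_left])
  have hUm : AEMeasurable U (volume.restrict O) :=
    (continuousOn_of_strongConvexOn hO hU).aemeasurable hO.measurableSet
  let Φ (x y : E) : ℝ := U y + ‖x - β • y‖ ^ 2 / (2 * α ^ 2) - c / 2 * ‖x‖ ^ 2
  have hexp (x y : E) : exp (-Φ x y) = exp (c / 2 * ‖x‖ ^ 2) *
      (exp (-U y) * gaussianKernel α (x - β • y)) := by
    rw [gaussianKernel, ← exp_add, ← exp_add]
    congr 1
    ring
  have hP (x : E) : ∫ y in O, exp (-Φ x y) =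
      exp (c / 2 * ‖x‖ ^ 2) * gaussianSmoothing ν α β x := by
    rw [hνU, gaussianSmoothing_withDensity_exp_neg hUm, ← integral_const_mul]
    simp only [hexp]
  have hint (x : E) : IntegrableOn (fun y => exp (-Φ x y)) O :=
    .of_integral_ne_zero (hP x ▸ (mul_pos (exp_pos _) (gaussianSmoothing_pos ν α β x)).ne')
  have hlog (x : E) : log (∫ y in O, exp (-Φ x y)) =
      log (gaussianSmoothing ν α β x) + c / 2 * ‖x‖ ^ 2 := by
    rw [hP, log_mul (exp_pos _).ne' (gaussianSmoothing_pos ν α β x).ne', log_exp, add_comm]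
  rw [strongConcaveOn_iff_convex]
  exact (concaveOn_log_setIntegral_exp_neg hO hO₀ (convexOn_add_norm_sub_smul_sq hα hq hU)
    hint).congr fun x _ => hlog x

end Measure

end GaussianSmoothing

section Velocity

variable {E : Type*} [NormedAddCommGroup E] [InnerProductSpace ℝ E]

theorem nonpos_of_concaveOn_of_hasDerivAt2 {φ φ' : ℝ → ℝ} {φ'' t : ℝ} (hφ : ConcaveOn ℝ univ φ)
    (h₁ : ∀ t, HasDerivAt φ (φ' t) t) (h₂ : HasDerivAt φ' φ'' t) : φ'' ≤ 0 := by
  have hanti := hφ.antitoneOn_deriv fun t _ => (h₁ t).differentiableAt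
  rw [funext fun t => (h₁ t).deriv] at hanti
  have h := hanti.derivWithin_nonpos (x := t)
  rwa [derivWithin_univ, h₂.deriv] at h

section Gradient

variable [CompleteSpace E]

theorem inner_fderiv_gradient_nonpos_of_concaveOn {f : E → ℝ} (hf : ConcaveOn ℝ univ f)
    {S : E → E} {S' : E →L[ℝ] E} {x : E} (hS : ∀ z, HasGradientAt f (S z) z)
    (hS' : HasFDerivAt S S' x) (w : E) : ⟪w, S' w⟫ ≤ 0 := by
  have hline (t : ℝ) : HasDerivAt (fun t : ℝ => x + t • w) w t := by
    simpa using ((hasDerivAt_id t).smul_const w).const_add x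
  have hconc : ConcaveOn ℝ univ fun t : ℝ => f (x + t • w) := by
    have h := hf.comp_affineMap (AffineMap.lineMap x (x + w))
    rw [preimage_univ] at h
    exact h.congr fun t _ => by simp [AffineMap.lineMap_apply, add_comm]
  have h₁ (t : ℝ) : HasDerivAt (fun t : ℝ => f (x + t • w)) ⟪w, S (x + t • w)⟫ t := by
    rw [real_inner_comm]
    exact (hS (x + t • w)).hasFDerivAt.comp_hasDerivAt t (hline t)
  have h₂ : HasDerivAt (fun t : ℝ => ⟪w, S (x + t • w)⟫) ⟪w, S' w⟫ 0 := by
    have hx : HasFDerivAt S S' (x + (0 : ℝ) • w) := by rwa [zero_smul, add_zero]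
    simpa using (hasDerivAt_const (0 : ℝ) w).inner ℝ (hx.comp_hasDerivAt 0 (hline 0))
  exact nonpos_of_concaveOn_of_hasDerivAt2 hconc h₁ h₂

theorem inner_fderiv_gradient_le_of_strongConcaveOn {f : E → ℝ} {c : ℝ}
    (hf : StrongConcaveOn univ c f) {S : E → E} {S' : E →L[ℝ] E} {x : E}
    (hS : ∀ z, HasGradientAt f (S z) z) (hS' : HasFDerivAt S S' x) (w : E) :
    ⟪w, S' w⟫ ≤ -c * ‖w‖ ^ 2 := by
  have hgrad (z : E) : HasGradientAt (fun z => f z + c / 2 * ‖z‖ ^ 2) (S z + c • z) z := by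
    rw [hasGradientAt_iff_hasFDerivAt]
    refine ((hS z).hasFDerivAt.add
      ((hasStrictFDerivAt_norm_sq z).hasFDerivAt.const_mul (c / 2))).congr_fderiv ?_
    ext w
    simp only [add_apply, smul_apply, coe_innerSL_apply, InnerProductSpace.toDual_apply_apply,
      nsmul_eq_mul, Nat.cast_ofNat, smul_eq_mul, inner_add_left, real_inner_smul_left]
    ring
  have h := inner_fderiv_gradient_nonpos_of_concaveOn (strongConcaveOn_iff_convex.1 hf) hgrad
    (hS'.add ((hasFDerivAt_id x).const_smul c)) w
  simp only [add_apply, smul_apply, ContinuousLinearMap.id_apply, inner_add_right,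
    real_inner_smul_right, real_inner_self_eq_norm_sq] at h
  linarith

theorem gradient_log_const_mul {C : ℝ} (hC : C ≠ 0) {f : E → ℝ} (hf : ∀ z, f z ≠ 0) (x : E) :
    gradient (fun z => log (C * f z)) x = gradient (fun z => log (f z)) x := by
  simp only [log_mul hC (hf _), gradient, fderiv_const_add]

end Gradient

variable [MeasurableSpace E] [BorelSpace E] [FiniteDimensional ℝ E]

/-- The score, i.e. the gradient of the logarithm of the density, of the Gaussian smoothing of `ν`
with parameters `α` and `β`. -/
def score (ν : Measure E) (α β : ℝ) (x : E) : E :=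
  gradient (fun z => log (gaussianSmoothing ν α β z)) x

/-- The velocity field of the interpolation at a time where its coefficients are `α`, `β` and their
time derivatives `α'`, `β'`. -/
def velocityField (ν : Measure E) (α β α' β' : ℝ) (x : E) : E :=
  (β' / β) • x + ((β' / β) * α ^ 2 - α' * α) • score ν α β x

variable {ν : Measure E} [IsFiniteMeasure ν] [NeZero ν] {α : ℝ}

theorem hasFDerivAt_log_gaussianSmoothing (hα : α ≠ 0) (β : ℝ) (x : E) :
    HasFDerivAt (fun z => log (gaussianSmoothing ν α β z))
      ((gaussianSmoothing ν α β x)⁻¹ • fderiv ℝ (gaussianSmoothing ν α β) x) x :=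
  (hasFDerivAt_gaussianSmoothing ν hα β x).differentiableAt.hasFDerivAt.log
    (gaussianSmoothing_pos ν α β x).ne'

theorem hasGradientAt_log_gaussianSmoothing (hα : α ≠ 0) (β : ℝ) (x : E) :
    HasGradientAt (fun z => log (gaussianSmoothing ν α β z)) (score ν α β x) x :=
  (hasFDerivAt_log_gaussianSmoothing hα β x).differentiableAt.hasGradientAt

theorem differentiable_score (hα : α ≠ 0) (β : ℝ) : Differentiable ℝ (score ν α β) := by
  have hscore : score ν α β = fun x => (InnerProductSpace.toDual ℝ E).symm
      ((gaussianSmoothing ν α β x)⁻¹ • fderiv ℝ (gaussianSmoothing ν α β) x) :=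
    funext fun x => by rw [score, gradient, (hasFDerivAt_log_gaussianSmoothing hα β x).fderiv]
  have hP : Differentiable ℝ (gaussianSmoothing ν α β) := fun x =>
    (hasFDerivAt_gaussianSmoothing ν hα β x).differentiableAt
  rw [hscore]
  exact (InnerProductSpace.toDual ℝ E).symm.toContinuousLinearEquiv.differentiable.comp
    ((hP.fun_inv fun x => (gaussianSmoothing_pos ν α β x).ne').fun_smul
      (differentiable_fderiv_gaussianSmoothing ν hα β))

theorem inner_fderiv_score_le {κ β : ℝ} (hν : IsSemiLogConcave κ ν) (hα : α ≠ 0)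
    (hq : 0 < κ * α ^ 2 + β ^ 2) (x w : E) :
    ⟪w, fderiv ℝ (score ν α β) x w⟫ ≤ -(κ / (κ * α ^ 2 + β ^ 2)) * ‖w‖ ^ 2 :=
  inner_fderiv_gradient_le_of_strongConcaveOn (strongConcaveOn_log_gaussianSmoothing hν hα hq)
    (hasGradientAt_log_gaussianSmoothing hα β) (differentiable_score hα β x).hasFDerivAt w

theorem inner_fderiv_velocityField (hα : α ≠ 0) (β α' β' : ℝ) (x w : E) :
    ⟪w, fderiv ℝ (velocityField ν α β α' β') x w⟫ = β' / β * ‖w‖ ^ 2 +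
      (β' / β * α ^ 2 - α' * α) * ⟪w, fderiv ℝ (score ν α β) x w⟫ := by
  have h : HasFDerivAt (velocityField ν α β α' β') _ x :=
    ((hasFDerivAt_id x).const_smul (β' / β)).add
      ((differentiable_score hα β x).hasFDerivAt.const_smul (β' / β * α ^ 2 - α' * α))
  rw [h.fderiv]
  simp only [add_apply, smul_apply, ContinuousLinearMap.id_apply, inner_add_right,
    real_inner_smul_right, real_inner_self_eq_norm_sq]

theorem velocity_jacobian_upper_bound_semi_log_concave_general {κ β α' β' : ℝ}
    (hν : IsSemiLogConcave κ ν) (hα : 0 < α) (hβ : 0 < β) (hα' : α' ≤ 0) (hβ' : 0 ≤ β')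
    (hq : 0 < κ * α ^ 2 + β ^ 2) (x w : E) :
    ⟪w, fderiv ℝ (velocityField ν α β α' β') x w⟫ ≤
      (κ * α * α' + β * β') / (κ * α ^ 2 + β ^ 2) * ‖w‖ ^ 2 := by
  have hcoef : 0 ≤ β' / β * α ^ 2 - α' * α :=
    sub_nonneg.2 ((mul_nonpos_of_nonpos_of_nonneg hα' hα.le).trans (by positivity))
  have hconst : β' / β + (β' / β * α ^ 2 - α' * α) * -(κ / (κ * α ^ 2 + β ^ 2)) =
      (κ * α * α' + β * β') / (κ * α ^ 2 + β ^ 2) := by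
    generalize hq' : κ * α ^ 2 + β ^ 2 = q at hq ⊢
    field_simp
    rw [← hq']
    ring
  calc ⟪w, fderiv ℝ (velocityField ν α β α' β') x w⟫
      = β' / β * ‖w‖ ^ 2 + (β' / β * α ^ 2 - α' * α) * ⟪w, fderiv ℝ (score ν α β) x w⟫ :=
        inner_fderiv_velocityField hα.ne' β α' β' x w
    _ ≤ β' / β * ‖w‖ ^ 2 +
          (β' / β * α ^ 2 - α' * α) * (-(κ / (κ * α ^ 2 + β ^ 2)) * ‖w‖ ^ 2) := by
        gcongr
        exact inner_fderiv_score_le hν hα.ne' hq x w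
    _ = (κ * α * α' + β * β') / (κ * α ^ 2 + β ^ 2) * ‖w‖ ^ 2 := by
        rw [← hconst]
        ring

end Velocity

/-- **Upper Jacobian bound for κ-semi-log-concave targets.** If `ν(dy) = exp(−U(y)) dy`
on a convex support with `∇²U ⪰ κ I` there, then for every `t ∈ (0,1)` with
`κ a_t² + b_t² > 0` and every `x`,
`∇_x v(t,x) ⪯ ((κ a_t ȧ_t + b_t ḃ_t)/(κ a_t² + b_t²)) I` (as quadratic forms). -/
theorem velocity_jacobian_upper_bound_semi_log_concave
    (d : ℕ) (hd : 1 ≤ d)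
    (κ : ℝ)
    (Ω : Set (EuclideanSpace ℝ (Fin d))) (hΩ_conv : Convex ℝ Ω)
    (U : EuclideanSpace ℝ (Fin d) → ℝ)
    (hU_C2 : ContDiffOn ℝ 2 U Ω)
    (hU_conc : ∀ y ∈ Ω, ∀ w : EuclideanSpace ℝ (Fin d),
      κ * ‖w‖ ^ 2 ≤ iteratedFDeriv ℝ 2 U y ![w, w])
    (ν : Measure (EuclideanSpace ℝ (Fin d))) [IsProbabilityMeasure ν]
    (hν : ν = (volume.restrict Ω).withDensity (fun y => ENNReal.ofReal (exp (-U y))))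
    (hmom : Integrable (fun y => ‖y‖ ^ 2) ν)
    -- interpolation coefficients
    (a b : ℝ → ℝ)
    (ha'_nonpos : ∀ t ∈ Icc (0:ℝ) 1, deriv a t ≤ 0)
    (hb'_nonneg : ∀ t ∈ Icc (0:ℝ) 1, 0 ≤ deriv b t)
    (ha0 : 0 < a 0) (hb0 : 0 ≤ b 0) (ha1 : a 1 = 0) (hb1 : b 1 = 1)
    (ha_pos : ∀ t ∈ Ioo (0:ℝ) 1, 0 < a t)
    (hb_pos : ∀ t ∈ Ioo (0:ℝ) 1, 0 < b t)
    (ha_C2 : ContDiffOn ℝ 2 a (Ico 0 1))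
    (hb_C2 : ContDiffOn ℝ 2 b (Ico 0 1))
    (ha2_C1 : ContDiffOn ℝ 1 (fun t => (a t) ^ 2) (Icc 0 1))
    (hb_C1 : ContDiffOn ℝ 1 b (Icc 0 1))
    -- marginal density, score and velocity field
    (p : ℝ → EuclideanSpace ℝ (Fin d) → ℝ)
    (hp : ∀ t x, p t x =
      ∫ y, (2 * π * (a t) ^ 2) ^ (-(d:ℝ)/2) * exp (-‖x - b t • y‖ ^ 2 / (2 * (a t) ^ 2)) ∂ν)
    (s : ℝ → EuclideanSpace ℝ (Fin d) → EuclideanSpace ℝ (Fin d))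
    (hs : ∀ t ∈ Ioo (0:ℝ) 1, ∀ x, s t x = gradient (fun z => Real.log (p t z)) x)
    (v : ℝ → EuclideanSpace ℝ (Fin d) → EuclideanSpace ℝ (Fin d))
    (hv : ∀ t ∈ Ioo (0:ℝ) 1, ∀ x,
      v t x = (deriv b t / b t) • x
        + ((deriv b t / b t) * (a t) ^ 2 - deriv a t * a t) • s t x) :
    ∀ t ∈ Ioo (0:ℝ) 1, κ * (a t) ^ 2 + (b t) ^ 2 > 0 →
      ∀ x, ∀ w : EuclideanSpace ℝ (Fin d),
        ⟪w, fderiv ℝ (v t) x w⟫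
          ≤ ((κ * a t * deriv a t + b t * deriv b t) / (κ * (a t) ^ 2 + (b t) ^ 2))
              * ‖w‖ ^ 2 := by
  intro t ht hpos x w
  have hα := ha_pos t ht
  have hP : p t = fun z => (2 * π * a t ^ 2) ^ (-(d : ℝ) / 2) *
      gaussianSmoothing ν (a t) (b t) z :=
    funext fun z => (hp t z).trans (integral_const_mul _ _)
  have hscore : s t = score ν (a t) (b t) := by
    funext z
    rw [hs t ht, hP]
    exact gradient_log_const_mul (by positivity) (fun z => (gaussianSmoothing_pos ν _ _ z).ne') z
  have hvel : v t = velocityField ν (a t) (b t) (deriv a t) (deriv b t) := by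
    funext z
    rw [hv t ht, hscore, velocityField]
  rw [hvel]
  exact velocity_jacobian_upper_bound_semi_log_concave_general
    (hν ▸ isSemiLogConcave_withDensity_exp_neg hΩ_conv hU_C2 hU_conc) hα (hb_pos t ht)
    (ha'_nonpos t (Ioo_subset_Icc_self ht)) (hb'_nonneg t (Ioo_subset_Icc_self ht)) hpos x w
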